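/- Let Λ ⊆ 𝕂 be a fractional ideal, E := ℂ/Λ, and d a positive integer. For every x = (x_a) ∈ V(E) and every k ∈ 𝕂 with k + Λ = x₁, one has I_x = {conj(a) : a ∈ J_x} = {a ∈ R ∖ {0} : a·k·d ∈ Λ}. -/

import Mathlib

/-!
Write `R = 𝓞 K`. Since `K/ℚ` is quadratic it is normal, so complex conjugation carries the image
of `K` in `ℂ` to itself, and hence (it preserves integrality) also the image of `R`. The
compatibility `a • x_a = x₁` turns `(a * conj a) • (d • x_a) = 0` into `d • (conj a • x₁) = 0`,
that is, `a ∈ J_x ↔ conj a ∈ I_x`; as conjugation is an involution of `R ∖ {0}`, this is the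
first equality. The second holds because `d • (a • x₁)` is the class of `a k d`, and
`K → ℂ` is injective.
-/

open NumberField

variable (K : Type*) [Field K] [NumberField K] [Algebra K ℂ]
  [Algebra (𝓞 K) ℂ] [IsScalarTower (𝓞 K) K ℂ]

/-- The image in `ℂ` of a fractional ideal `Λ ⊆ K`, as an `𝓞 K`-submodule of `ℂ`;
`E = ℂ ⧸ latticeInC K Λ` is the associated CM elliptic curve. -/
noncomputable def latticeInC (Λ : Submodule (𝓞 K) K) : Submodule (𝓞 K) ℂ :=
  Λ.map ((Algebra.linearMap K ℂ).restrictScalars (𝓞 K))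

/-- Membership in the adelic elliptic curve `V(E)`: a family `(x_a)`, indexed by the nonzero
`a ∈ 𝓞 K`, of points of `E = ℂ ⧸ M`, such that `c • x_{b·c} = x_b` for all nonzero `b, c`
(i.e. `(a/b)·x_a = x_b` whenever `b ∣ a`) and `x₁` is a torsion point. -/
def MemV (M : Submodule (𝓞 K) ℂ) (x : {a : 𝓞 K // a ≠ 0} → ℂ ⧸ M) : Prop :=
  (∀ b c : {a : 𝓞 K // a ≠ 0}, (c : 𝓞 K) • x ⟨b.1 * c.1, mul_ne_zero b.2 c.2⟩ = x b) ∧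
  IsOfFinAddOrder (x ⟨1, one_ne_zero⟩)

/-- The image of the ring of integers of a quadratic field in `ℂ` is stable under conjugation. -/
theorem exists_conj (K : Type*) [Field K] [NumberField K] [Algebra K ℂ]
    [Algebra (𝓞 K) ℂ] [IsScalarTower (𝓞 K) K ℂ]
    (hdeg : Module.finrank ℚ K = 2) (a : 𝓞 K) :
    ∃ c : 𝓞 K, algebraMap (𝓞 K) ℂ c = (starRingEnd ℂ) (algebraMap (𝓞 K) ℂ a) := by
  have : Algebra.IsQuadraticExtension ℚ K := { finrank_eq_two' := hdeg }
  have hn : Normal ℚ K := inferInstance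
  set b : K := algebraMap (𝓞 K) K a with hb
  have hab : algebraMap (𝓞 K) ℂ a = algebraMap K ℂ b := IsScalarTower.algebraMap_apply _ _ _ _
  let ψ : K →+* ℂ := (starRingEnd ℂ).comp (algebraMap K ℂ)
  -- `conj b` is a complex root of the minimal polynomial of `b`, which splits in `K`.
  have hroot : Polynomial.aeval (ψ b) (minpoly ℚ b) = 0 := by
    have := Polynomial.aeval_algHom_apply ψ.toRatAlgHom b (minpoly ℚ b)
    rw [minpoly.aeval, map_zero] at this
    exact this
  have hs := hn.splits b
  obtain ⟨c, hc⟩ : ∃ c : K, algebraMap K ℂ c = ψ b := by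
    have hs' : ((minpoly ℚ b).map (algebraMap ℚ K)).Splits := hs
    refine hs'.mem_range_of_isRoot ?_ ?_
    · exact Polynomial.map_ne_zero (minpoly.ne_zero (Algebra.IsIntegral.isIntegral b))
    · rw [Polynomial.map_map, ← IsScalarTower.algebraMap_eq, Polynomial.IsRoot.def,
        Polynomial.eval_map_algebraMap]
      exact hroot
  have hint : IsIntegral ℤ c := by
    rw [← isIntegral_algHom_iff (algebraMap K ℂ).toIntAlgHom (algebraMap K ℂ).injective]
    change IsIntegral ℤ (algebraMap K ℂ c)
    rw [hc]
    exact (RingOfIntegers.isIntegral_coe a).map ψ.toIntAlgHom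
  refine ⟨⟨c, hint⟩, ?_⟩
  rw [hab]
  exact (IsScalarTower.algebraMap_apply (𝓞 K) K ℂ _).trans hc

/-- Let `Λ ⊆ K` be a fractional ideal, `E := ℂ/Λ`, and `d > 0`.  For every
`x = (x_a) ∈ V(E)` and every `k ∈ K` with `k + Λ = x₁`, one has
`I_x = {conj a : a ∈ J_x} = {a ∈ R∖{0} : a·k·d ∈ Λ}`, where
`I_x = {a ≠ 0 : a·x₁ ∈ E[d]}` and `J_x = {a ≠ 0 : x_a ∈ E[(a·conj a)·d]}` (the complex
conjugate `conj a` of `a ∈ 𝓞 K` is expressed through the embedding `𝓞 K → ℂ`). -/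
theorem stmt10 (K : Type*) [Field K] [NumberField K] [Algebra K ℂ]
    [Algebra (𝓞 K) ℂ] [IsScalarTower (𝓞 K) K ℂ]
    (hdeg : Module.finrank ℚ K = 2) (himag : IsEmpty (K →+* ℝ))
    (Λ : Submodule (𝓞 K) K) (hfg : Λ.FG) (hne : Λ ≠ ⊥)
    (d : ℕ) (hd : 0 < d)
    (x : {a : 𝓞 K // a ≠ 0} → ℂ ⧸ latticeInC K Λ) (hx : MemV K (latticeInC K Λ) x)
    (k : K) (hk : Submodule.Quotient.mk (algebraMap K ℂ k) = x ⟨1, one_ne_zero⟩) :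
    -- `I_x`, the set of nonzero `a` with `a·x₁ ∈ E[d]`:
    let Ix : Set {a : 𝓞 K // a ≠ 0} :=
      {a | d • ((a : 𝓞 K) • x ⟨1, one_ne_zero⟩) = 0}
    -- `J_x`, the set of nonzero `a` with `x_a ∈ E[(a·conj a)·d]`:
    let Jx : Set {a : 𝓞 K // a ≠ 0} :=
      {a | ∃ c : 𝓞 K, algebraMap (𝓞 K) ℂ c = (starRingEnd ℂ) (algebraMap (𝓞 K) ℂ a.1) ∧
        ((a : 𝓞 K) * c) • (d • x a) = 0}
    Ix = {a | ∃ b ∈ Jx, algebraMap (𝓞 K) ℂ a.1 =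
        (starRingEnd ℂ) (algebraMap (𝓞 K) ℂ b.1)} ∧
    Ix = {a | algebraMap (𝓞 K) K a.1 * k * (d : K) ∈ Λ} := by
  intro Ix Jx
  have hJ : ∀ (b : {a : 𝓞 K // a ≠ 0}) (c : 𝓞 K),
      ((b : 𝓞 K) * c) • (d • x b) = d • (c • x ⟨1, one_ne_zero⟩) := by
    intro b c
    have h := hx.1 ⟨1, one_ne_zero⟩ b
    simp only [one_mul] at h
    rw [← h, mul_comm, mul_smul, smul_comm (b : 𝓞 K) d, smul_comm c d]
  have hinj : Function.Injective (algebraMap (𝓞 K) ℂ) := by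
    rw [IsScalarTower.algebraMap_eq (𝓞 K) K ℂ]
    exact (algebraMap K ℂ).injective.comp RingOfIntegers.coe_injective
  constructor
  · ext a
    constructor
    · intro ha
      obtain ⟨c, hc⟩ := exists_conj K hdeg a.1
      have hc0 : c ≠ 0 := by
        rintro rfl
        rw [map_zero, eq_comm, map_eq_zero] at hc
        exact a.2 (hinj (hc.trans (map_zero _).symm))
      refine ⟨⟨c, hc0⟩, ⟨a.1, ?_, ?_⟩, ?_⟩
      · rw [hc, Complex.conj_conj]
      · rw [hJ ⟨c, hc0⟩]
        exact ha
      · rw [hc, Complex.conj_conj]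
    · rintro ⟨b, ⟨c, hc, h⟩, hab⟩
      rw [hJ, hinj (hc.trans hab.symm)] at h
      exact h
  · ext a
    change d • ((a : 𝓞 K) • x ⟨1, one_ne_zero⟩) = 0 ↔ _
    rw [← hk, ← Submodule.Quotient.mk_smul, ← Submodule.Quotient.mk_smul,
      Submodule.Quotient.mk_eq_zero]
    have he : d • ((a : 𝓞 K) • algebraMap K ℂ k)
        = algebraMap K ℂ (algebraMap (𝓞 K) K a.1 * k * (d : K)) := by
      rw [nsmul_eq_mul, Algebra.smul_def, IsScalarTower.algebraMap_apply (𝓞 K) K ℂ, map_mul, map_mul,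
        map_natCast]
      ring
    rw [he]
    constructor
    · rintro ⟨y, hy, hye⟩
      change algebraMap (𝓞 K) K a.1 * k * (d : K) ∈ Λ
      rw [← (algebraMap K ℂ).injective hye]
      exact hy
    · exact fun h => ⟨_, h, rfl⟩
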